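/- Let q = p^m, σ = p^k, and let a,b,c ∈ F_q with a ≠ 0. Then the polynomials Π_1(x) = x^{σ²+σ+1} − b·x^{σ²+σ} + a·c^σ·x^{σ²} − a^{σ+1} and Π_2(x) = x^{σ²+σ+1} + c·x^{σ²+σ} + b·x^{σ²} + a in F_q[x] have the same number of distinct roots in F_q. -/

import Mathlib

/-! For an automorphism `σ` of a finite field `K`, a skew polynomial `f = ∑ fᵢ tⁱ ∈ K[t; σ]` has as
many right roots `u` (meaning `f ∈ K[t; σ] (t - u)`, i.e. `f` vanishes at `u` when `tⁱ` is replaced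
by `u · σ u ⋯ σ^(i-1) u`) as its adjoint `f* = ∑ t⁻ⁱ fᵢ ∈ K[t; σ⁻¹]`.

Indeed, for `D = lσ` and `z ≠ 0`, the operator `f(D)` kills `z` exactly when `l σ(z) / z` is a right
root of `f`. Hence, summing over `l`, the sizes of the kernels of the operators `f(lσ)` determine
the number of right roots of `f`. The trace form makes `f(lσ)` adjoint to `f*(σ⁻¹(l) σ⁻¹)`, so these
two kernels have the same size.

Up to the substitutions `x ↦ x⁻¹` and `x ↦ -x / σ⁻¹(a)`, the roots of `Π₂` and `Π₁` are the right
roots of `f = 1 + c t + b t² + a t³` and of `f*`. -/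

open Finset

section Adjoint

variable {R M M₁ : Type*} [CommSemiring R] [AddCommMonoid M] [Module R M] [AddCommMonoid M₁]
  [Module R M₁] {B : LinearMap.BilinForm R M} {B₁ : LinearMap.BilinForm R M₁}

theorem isAdjointPair_pow {f g : Module.End R M} (h : LinearMap.IsAdjointPair B B f g) (i : ℕ) :
    LinearMap.IsAdjointPair B B ⇑(f ^ i) ⇑(g ^ i) := by
  induction i with
  | zero => exact LinearMap.isAdjointPair_one
  | succ i ih => simpa only [pow_succ' g, pow_succ f] using ih.mul h

theorem isAdjointPair_sum {ι : Type*} (s : Finset ι) {f : ι → M →ₗ[R] M₁} {g : ι → M₁ →ₗ[R] M}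
    (h : ∀ i ∈ s, LinearMap.IsAdjointPair B B₁ (f i) (g i)) :
    LinearMap.IsAdjointPair B B₁ ⇑(∑ i ∈ s, f i) ⇑(∑ i ∈ s, g i) := fun x y ↦ by
  simp only [LinearMap.sum_apply, map_sum]
  exact sum_congr rfl fun i hi ↦ h i hi x y

theorem ker_eq_orthogonal_range_of_isAdjointPair (hB : B.SeparatingRight) {f : M →ₗ[R] M₁}
    {g : M₁ →ₗ[R] M} (h : LinearMap.IsAdjointPair B B₁ f g) :
    g.ker = B₁.orthogonal f.range := by
  ext y
  simp only [LinearMap.mem_ker, LinearMap.BilinForm.mem_orthogonal_iff, LinearMap.mem_range,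
    forall_exists_index, forall_apply_eq_imp_iff, h _ y]
  exact ⟨fun hy x ↦ by rw [hy, map_zero], hB _⟩

end Adjoint

theorem finrank_ker_eq_of_isAdjointPair {F V : Type*} [Field F] [AddCommGroup V] [Module F V]
    [FiniteDimensional F V] {B : LinearMap.BilinForm F V} (hB : B.Nondegenerate)
    {f g : Module.End F V} (h : LinearMap.IsAdjointPair B B f g) :
    Module.finrank F f.ker = Module.finrank F g.ker := by
  rw [ker_eq_orthogonal_range_of_isAdjointPair hB.2 h, LinearMap.BilinForm.finrank_orthogonal hB]
  have := f.finrank_range_add_finrank_ker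
  lia

section CommRing

variable {F K : Type*} [CommRing F] [CommRing K] [Algebra F K] {n : ℕ}

/-- The truncated norm `u · σ u ⋯ σ^(i-1) u`, the value of the monomial `tⁱ ∈ K[t; σ]` at `u`. -/
def truncatedNorm (σ : K ≃ₐ[F] K) (i : ℕ) (u : K) : K := ∏ j ∈ range i, (σ ^ j) u

/-- The right evaluation at `u` of the skew polynomial `∑ fᵢ tⁱ ∈ K[t; σ]`, that is, its remainder
on right division by `t - u`. The polynomial is encoded by its tuple of coefficients. -/
def skewEval (σ : K ≃ₐ[F] K) (f : Fin n → K) (u : K) : K := ∑ i, f i * truncatedNorm σ i u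

/-- The coefficients of the adjoint `∑ t⁻ⁱ fᵢ ∈ K[t; σ⁻¹]` of the skew polynomial
`∑ fᵢ tⁱ ∈ K[t; σ]`, moved to the left of the powers of `t⁻¹`. -/
def adjointCoeff (σ : K ≃ₐ[F] K) (f : Fin n → K) (i : Fin n) : K := (σ⁻¹ ^ (i : ℕ)) (f i)

/-- The operator `z ↦ l * σ z`. As `(lσ) (c z) = σ(c) (lσ) z`, the variable `t` of `K[t; σ]` can act
on `K` by it. -/
def twistedMul (σ : K ≃ₐ[F] K) (l : K) : Module.End F K := l • σ.toLinearMap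

/-- The action on `K` of the skew polynomial `∑ fᵢ tⁱ ∈ K[t; σ]` when `t` acts as
`twistedMul σ l`. -/
def skewOperator (σ : K ≃ₐ[F] K) (f : Fin n → K) (l : K) : Module.End F K :=
  ∑ i, f i • twistedMul σ l ^ (i : ℕ)

theorem twistedMul_apply (σ : K ≃ₐ[F] K) (l z : K) : twistedMul σ l z = l * σ z := rfl

theorem skewOperator_apply (σ : K ≃ₐ[F] K) (f : Fin n → K) (l z : K) :
    skewOperator σ f l z = ∑ i, f i * (twistedMul σ l ^ (i : ℕ)) z := by
  simp only [skewOperator, LinearMap.sum_apply, LinearMap.smul_apply, smul_eq_mul]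

theorem truncatedNorm_succ (σ : K ≃ₐ[F] K) (i : ℕ) (u : K) :
    truncatedNorm σ (i + 1) u = σ (truncatedNorm σ i u) * u := by
  simp only [truncatedNorm, prod_range_succ', map_prod, pow_succ', AlgEquiv.mul_apply, pow_zero,
    AlgEquiv.one_apply]

theorem twistedMul_pow_mul (σ : K ≃ₐ[F] K) (l c z : K) (i : ℕ) :
    (twistedMul σ l ^ i) (c * z) = (σ ^ i) c * (twistedMul σ l ^ i) z := by
  induction i with
  | zero => rfl
  | succ i ih =>
    simp only [pow_succ', Module.End.mul_apply, AlgEquiv.mul_apply, ih, twistedMul_apply, map_mul]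
    ring

theorem twistedMul_pow_apply_of_eq_mul {σ : K ≃ₐ[F] K} {l u z : K} (h : twistedMul σ l z = u * z)
    (i : ℕ) : (twistedMul σ l ^ i) z = truncatedNorm σ i u * z := by
  induction i with
  | zero => simp [truncatedNorm]
  | succ i ih =>
    calc (twistedMul σ l ^ (i + 1)) z
        = σ (truncatedNorm σ i u) * twistedMul σ l z := by
          rw [pow_succ', Module.End.mul_apply, ih, twistedMul_apply, twistedMul_apply, map_mul]
          ring
      _ = truncatedNorm σ (i + 1) u * z := by rw [h, truncatedNorm_succ, mul_assoc]

theorem isAdjointPair_traceForm_twistedMul (σ : K ≃ₐ[F] K) (l : K) :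
    LinearMap.IsAdjointPair (Algebra.traceForm F K) (Algebra.traceForm F K)
      (twistedMul σ l) (twistedMul σ⁻¹ (σ⁻¹ l)) := fun x y ↦ by
  have h : l * σ x * y = σ (x * (σ⁻¹ l * σ⁻¹ y)) := by
    simp only [map_mul, AlgEquiv.aut_inv, AlgEquiv.apply_symm_apply]
    ring
  simp only [Algebra.traceForm_apply, twistedMul_apply, h, Algebra.trace_eq_of_algEquiv]

theorem isAdjointPair_traceForm_skewOperator (σ : K ≃ₐ[F] K) (f : Fin n → K) (l : K) :
    LinearMap.IsAdjointPair (Algebra.traceForm F K) (Algebra.traceForm F K)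
      (skewOperator σ f l) (skewOperator σ⁻¹ (adjointCoeff σ f) (σ⁻¹ l)) := by
  refine isAdjointPair_sum univ fun i _ x y ↦ ?_
  have hpow := isAdjointPair_pow (isAdjointPair_traceForm_twistedMul σ l) i x (f i * y)
  rw [twistedMul_pow_mul] at hpow
  simpa only [Algebra.traceForm_apply, LinearMap.smul_apply, smul_eq_mul, adjointCoeff, mul_comm,
    mul_assoc, mul_left_comm] using hpow

theorem skewEval_fin_four (σ : K ≃ₐ[F] K) (f₀ f₁ f₂ f₃ u : K) :
    skewEval σ ![f₀, f₁, f₂, f₃] u =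
      f₀ + f₁ * u + f₂ * (u * σ u) + f₃ * (u * σ u * σ (σ u)) := by
  simp [skewEval, truncatedNorm, Fin.sum_univ_four, prod_range_succ]

theorem adjointCoeff_fin_four (σ : K ≃ₐ[F] K) (f₀ f₁ f₂ f₃ : K) :
    adjointCoeff σ ![f₀, f₁, f₂, f₃] =
      ![f₀, σ⁻¹ f₁, σ⁻¹ (σ⁻¹ f₂), σ⁻¹ (σ⁻¹ (σ⁻¹ f₃))] := by
  ext i
  fin_cases i <;> rfl

end CommRing

section Field

variable {F K : Type*} [Field F] [Field K] [Algebra F K] {n : ℕ}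

theorem skewOperator_apply_eq_zero_iff (σ : K ≃ₐ[F] K) (f : Fin n → K) (l : K) {z : K}
    (hz : z ≠ 0) : skewOperator σ f l z = 0 ↔ skewEval σ f (l * σ z / z) = 0 := by
  have h : twistedMul σ l z = l * σ z / z * z := (div_mul_cancel₀ _ hz).symm
  have heval : skewOperator σ f l z = skewEval σ f (l * σ z / z) * z := by
    simp only [skewOperator_apply, twistedMul_pow_apply_of_eq_mul h, skewEval, sum_mul, mul_assoc]
  rw [heval, mul_eq_zero_iff_right hz]

section Finite

variable [Fintype K] [DecidableEq K]

theorem card_skewOperator_eq_zero_adjointCoeff (σ : K ≃ₐ[F] K) (f : Fin n → K) (l : K) :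
    #{z | skewOperator σ f l z = 0} =
      #{z | skewOperator σ⁻¹ (adjointCoeff σ f) (σ⁻¹ l) z = 0} := by
  have : Finite F := .of_injective _ (algebraMap F K).injective
  have hcard (g : Module.End F K) : #{z | g z = 0} = Nat.card F ^ Module.finrank F g.ker := by
    rw [← Module.natCard_eq_pow_finrank, ← Fintype.card_subtype, ← Nat.card_eq_fintype_card]
    rfl
  rw [hcard, hcard, finrank_ker_eq_of_isAdjointPair (traceForm_nondegenerate F K)
    (isAdjointPair_traceForm_skewOperator σ f l)]

theorem sum_card_skewOperator_eq_zero (σ : K ≃ₐ[F] K) (f : Fin n → K) :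
    ∑ l, #{z | skewOperator σ f l z = 0} =
      Fintype.card K + (Fintype.card K - 1) * #{u | skewEval σ f u = 0} := by
  have hfiber (z : K) (hz : z ∈ univ.erase 0) :
      #{l | skewOperator σ f l z = 0} = #{u | skewEval σ f u = 0} := by
    have hz0 : z ≠ 0 := ne_of_mem_erase hz
    have hσz : σ z / z ≠ 0 := div_ne_zero (by simpa using hz0) hz0
    refine card_equiv (Equiv.mulRight₀ _ hσz) fun l ↦ ?_
    simp [skewOperator_apply_eq_zero_iff σ f l hz0, mul_div_assoc]
  calc ∑ l, #{z | skewOperator σ f l z = 0}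
      = ∑ z, #{l | skewOperator σ f l z = 0} :=
        sum_card_bipartiteAbove_eq_sum_card_bipartiteBelow fun l z ↦ skewOperator σ f l z = 0
    _ = #{l | skewOperator σ f l 0 = 0} + ∑ z ∈ univ.erase 0, #{l | skewOperator σ f l z = 0} :=
        (add_sum_erase _ _ (mem_univ 0)).symm
    _ = Fintype.card K + (Fintype.card K - 1) * #{u | skewEval σ f u = 0} := by
        rw [sum_congr rfl hfiber, sum_const, card_erase_of_mem (mem_univ 0)]
        simp

theorem card_skewEval_eq_zero_adjointCoeff (σ : K ≃ₐ[F] K) (f : Fin n → K) :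
    #{u | skewEval σ f u = 0} = #{u | skewEval σ⁻¹ (adjointCoeff σ f) u = 0} := by
  have hsum : ∑ l, #{z | skewOperator σ f l z = 0} =
      ∑ l, #{z | skewOperator σ⁻¹ (adjointCoeff σ f) l z = 0} :=
    Fintype.sum_equiv σ⁻¹.toEquiv _ _ (card_skewOperator_eq_zero_adjointCoeff σ f)
  rw [sum_card_skewOperator_eq_zero, sum_card_skewOperator_eq_zero] at hsum
  have hpos : 0 < Fintype.card K - 1 := Nat.sub_pos_of_lt Fintype.one_lt_card
  exact Nat.eq_of_mul_eq_mul_left hpos (Nat.add_left_cancel hsum)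

end Finite

theorem skewEval_inv_eq_zero_iff (σ : K ≃ₐ[F] K) {a : K} (ha : a ≠ 0) (b c x : K) :
    skewEval σ ![1, c, b, a] x⁻¹ = 0 ↔
      σ (σ x) * σ x * x + c * (σ (σ x) * σ x) + b * σ (σ x) + a = 0 := by
  rcases eq_or_ne x 0 with rfl | hx
  · simp [skewEval_fin_four, ha]
  have hσx : σ x ≠ 0 := by simpa using hx
  have hσσx : σ (σ x) ≠ 0 := by simpa using hx
  have h : σ (σ x) * σ x * x + c * (σ (σ x) * σ x) + b * σ (σ x) + a =
      σ (σ x) * σ x * x * skewEval σ ![1, c, b, a] x⁻¹ := by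
    simp only [skewEval_fin_four, map_inv₀]
    field_simp
  rw [h, mul_eq_zero_iff_left (by simp [hx])]

theorem skewEval_adjointCoeff_div_eq_zero_iff (σ : K ≃ₐ[F] K) {a : K} (ha : a ≠ 0) (b c x : K) :
    skewEval σ⁻¹ (adjointCoeff σ ![1, c, b, a]) (x / -σ⁻¹ a) = 0 ↔
      σ (σ x) * σ x * x - b * (σ (σ x) * σ x) + a * σ c * σ (σ x) - a * σ a = 0 := by
  have hσa : σ a ≠ 0 := by simpa using ha
  have hτa : σ⁻¹ a ≠ 0 := by simpa using ha
  have hσ (y : K) : σ (σ⁻¹ y) = y := σ.apply_symm_apply y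
  have h : σ (σ x) * σ x * x - b * (σ (σ x) * σ x) + a * σ c * σ (σ x) - a * σ a =
      -(a * σ a) *
        σ (σ (skewEval σ⁻¹ (adjointCoeff σ ![1, c, b, a]) (x / -σ⁻¹ a))) := by
    simp only [adjointCoeff_fin_four, skewEval_fin_four, map_add, map_mul, map_div₀, map_neg,
      map_one, hσ]
    field_simp
    ring
  rw [h, mul_eq_zero_iff_left (by simp [ha])]
  simp

theorem ncard_roots_adjoint_projectiveCubic [Finite K] (σ : K ≃ₐ[F] K) {a : K} (ha : a ≠ 0)
    (b c : K) :
    {x | σ (σ x) * σ x * x - b * (σ (σ x) * σ x) + a * σ c * σ (σ x) - a * σ a = 0}.ncard =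
      {x | σ (σ x) * σ x * x + c * (σ (σ x) * σ x) + b * σ (σ x) + a = 0}.ncard := by
  classical
  have : Fintype K := Fintype.ofFinite K
  have hτa : -σ⁻¹ a ≠ 0 := by simpa using ha
  simp only [Set.ncard_eq_toFinset_card', Set.toFinset_ofPred,
    ← skewEval_inv_eq_zero_iff σ ha, ← skewEval_adjointCoeff_div_eq_zero_iff σ ha]
  calc #{x | skewEval σ⁻¹ (adjointCoeff σ ![1, c, b, a]) (x / -σ⁻¹ a) = 0}
      = #{u | skewEval σ⁻¹ (adjointCoeff σ ![1, c, b, a]) u = 0} :=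
        card_equiv (Equiv.divRight₀ _ hτa) (by simp)
    _ = #{u | skewEval σ ![1, c, b, a] u = 0} := (card_skewEval_eq_zero_adjointCoeff σ _).symm
    _ = #{x | skewEval σ ![1, c, b, a] x⁻¹ = 0} :=
        card_equiv (Equiv.inv K) (by simp)

end Field

/-- for `a,b,c ∈ F_q` with `a ≠ 0`, the polynomials
`Π₁(x) = x^{σ²+σ+1} - b x^{σ²+σ} + a c^σ x^{σ²} - a^{σ+1}` and
`Π₂(x) = x^{σ²+σ+1} + c x^{σ²+σ} + b x^{σ²} + a` have the same number of
distinct roots in `F_q`. -/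
theorem stmt14 {p m k : ℕ} (hp : p.Prime) (hm : 0 < m)
    {K : Type*} [Field K] [Fintype K] (hK : Fintype.card K = p ^ m)
    (a b c : K) (ha : a ≠ 0) :
    {x : K | x ^ (p ^ (2 * k) + p ^ k + 1) - b * x ^ (p ^ (2 * k) + p ^ k)
        + a * c ^ p ^ k * x ^ (p ^ (2 * k)) - a ^ (p ^ k + 1) = 0}.ncard =
      {x : K | x ^ (p ^ (2 * k) + p ^ k + 1) + c * x ^ (p ^ (2 * k) + p ^ k)
        + b * x ^ (p ^ (2 * k)) + a = 0}.ncard := by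
  have : Fact p.Prime := ⟨hp⟩
  have : CharP K p := charP_of_card_eq_prime_pow hK
  let : Algebra (ZMod p) K := ZMod.algebra K p
  let σ : K ≃ₐ[ZMod p] K := FiniteField.frobeniusAlgEquivOfAlgebraic (ZMod p) K ^ k
  have hσ (x : K) : x ^ p ^ k = σ x := by
    simp only [σ, AlgEquiv.coe_pow, FiniteField.coe_frobeniusAlgEquivOfAlgebraic_iterate,
      ZMod.card]
  have hσσ (x : K) : x ^ p ^ (2 * k) = σ (σ x) := by
    rw [← hσ, ← hσ, ← pow_mul, ← pow_add, two_mul]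
  simp only [pow_add, pow_one, hσ, hσσ, mul_comm (σ a) a]
  exact ncard_roots_adjoint_projectiveCubic σ ha b c
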